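/- Let G ≤ SL(2,ℝ) be a non-uniform lattice such that ∞ is a cusp of G. Then, as subsets of [0,+∞], the set { 2·height_G(γ(x,y)) : x, y ∈ ℝ ∪ {∞}, x ≠ y } of doubled essential heights of all complete hyperbolic geodesics equals the Lagrange spectrum 𝓛(G,∞) = { L_G(α) : α ∈ ℝ }. -/

import Mathlib

open scoped ENNReal
open MeasureTheory

noncomputable section

/-- `SL(2,ℝ)`. -/
abbrev SL2R := Matrix.SpecialLinearGroup (Fin 2) ℝ

/-- The entry in position (1,1) of a matrix in `SL(2,ℝ)`. -/
def entryA (g : SL2R) : ℝ := g.1 0 0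

/-- The entry in position (1,2) of a matrix in `SL(2,ℝ)`. -/
def entryB (g : SL2R) : ℝ := g.1 0 1

/-- The entry in position (2,1) of a matrix in `SL(2,ℝ)`. -/
def entryC (g : SL2R) : ℝ := g.1 1 0

/-- The entry in position (2,2) of a matrix in `SL(2,ℝ)`. -/
def entryD (g : SL2R) : ℝ := g.1 1 1

/-- The Möbius action of `g ∈ SL(2,ℝ)` on the complex plane (well defined on the
upper half-plane): `z ↦ (az+b)/(cz+d)`. -/
def moeb (g : SL2R) (z : ℂ) : ℂ :=
  ((entryA g : ℂ) * z + (entryB g : ℂ)) / ((entryC g : ℂ) * z + (entryD g : ℂ))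

/-- The upper half-plane `ℍ = {z : 0 < Im z}`, as a subset of `ℂ`. -/
def UHP : Set ℂ := {z : ℂ | 0 < z.im}

/-- Hyperbolic area of a subset of the upper half-plane: `∫∫ dx dy / y²`. -/
def hypArea (s : Set ℂ) : ℝ≥0∞ := ∫⁻ z in s, ENNReal.ofReal (1 / z.im ^ 2)

/-- A subgroup of `SL(2,ℝ)` is discrete if each of its elements is isolated
(in the topology of coefficientwise convergence). -/
def IsDiscreteSubgroup (G : Subgroup SL2R) : Prop :=
  ∀ g ∈ G, ∃ ε > (0 : ℝ), ∀ h ∈ G, (∀ i j, |h.1 i j - g.1 i j| < ε) → h = g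

/-- `F` is a (measurable) fundamental domain for the action of `G` on the upper
half-plane: the `G`-translates of `F` cover `ℍ`, and for every `g ∈ G` acting
nontrivially, `F` and `g·F` overlap in hyperbolic area zero. -/
def IsFundDom (G : Subgroup SL2R) (F : Set ℂ) : Prop :=
  F ⊆ UHP ∧ MeasurableSet F ∧
    (∀ z ∈ UHP, ∃ g ∈ G, moeb g z ∈ F) ∧
    (∀ g ∈ G, (∃ z ∈ UHP, moeb g z ≠ z) → hypArea (F ∩ (moeb g '' F)) = 0)

/-- `G ≤ SL(2,ℝ)` is a non-uniform lattice: it is discrete, it admits a fundamental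
domain of finite hyperbolic area, and the quotient `G\ℍ` is not compact (no compact
subset of `ℍ` meets every orbit). -/
def IsNonUniformLattice (G : Subgroup SL2R) : Prop :=
  IsDiscreteSubgroup G ∧
    (∃ F : Set ℂ, IsFundDom G F ∧ hypArea F < ⊤) ∧
    ¬ ∃ K : Set ℂ, IsCompact K ∧ K ⊆ UHP ∧ ∀ z ∈ UHP, ∃ g ∈ G, moeb g z ∈ K

/-- `∞` is a cusp of `G`: `G` contains a parabolic element `[[1,μ],[0,1]]` with `μ ≠ 0`. -/
def HasCuspAtInfty (G : Subgroup SL2R) : Prop :=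
  ∃ μ : ℝ, μ ≠ 0 ∧ ∃ p : SL2R, p.1 = !![1, μ; 0, 1] ∧ p ∈ G

/-- The set of `k > 0` such that there are infinitely many `g ∈ G`, with pairwise
distinct values `g·∞ = a(g)/c(g) ∈ ℝ`, with `|α − g·∞| < 1/(k c(g)²)`. -/
def LagrangeSet (G : Subgroup SL2R) (α : ℝ) : Set ℝ :=
  {k : ℝ | 0 < k ∧
    {v : ℝ | ∃ g ∈ G, entryC g ≠ 0 ∧ v = entryA g / entryC g ∧
      |α - v| < 1 / (k * entryC g ^ 2)}.Infinite}

/-- The Lagrange value `L_G(α) ∈ [0,∞]` (with the convention `sup ∅ = 0`). -/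
def LagrangeValue (G : Subgroup SL2R) (α : ℝ) : ℝ≥0∞ :=
  sSup (ENNReal.ofReal '' LagrangeSet G α)

/-- The Lagrange spectrum of `G` at `∞`. -/
def LagrangeSpectrum (G : Subgroup SL2R) : Set ℝ≥0∞ :=
  {L : ℝ≥0∞ | ∃ α : ℝ, LagrangeValue G α = L}

/-- The boundary `ℝ ∪ {∞}` of the upper half-plane, with `none` playing the role of `∞`,
and the Möbius action of `SL(2,ℝ)` on it. -/
def bdAct (g : SL2R) (p : Option ℝ) : Option ℝ :=
  match p with
  | none => if entryC g = 0 then none else some (entryA g / entryC g)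
  | some x =>
      if entryC g * x + entryD g = 0 then none
      else some ((entryA g * x + entryB g) / (entryC g * x + entryD g))

/-- The naive height of the hyperbolic geodesic `γ(x,y)` with endpoints `x, y` on the
boundary `ℝ ∪ {∞}`: it is `|x−y|/2` if both endpoints are real, and `+∞` otherwise. -/
def naiveHeight (x y : Option ℝ) : ℝ≥0∞ :=
  match x, y with
  | some u, some v => ENNReal.ofReal (|u - v| / 2)
  | _, _ => ⊤

/-- `g` and `h` are equivalent modulo infinity: `g = k h` for some `k ∈ G` fixing `∞`. -/
def EquivModInf (G : Subgroup SL2R) (g h : SL2R) : Prop :=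
  ∃ k ∈ G, entryC k = 0 ∧ g = k * h

/-- The set of `k > 0` such that `height(g(γ(x,y))) ≥ k` for infinitely many pairwise
inequivalent (modulo infinity) elements `g ∈ G`. -/
def essHeightSet (G : Subgroup SL2R) (x y : Option ℝ) : Set ℝ :=
  {k : ℝ | 0 < k ∧ ∃ S : Set SL2R, S.Infinite ∧
    (∀ g ∈ S, g ∈ G ∧ ENNReal.ofReal k ≤ naiveHeight (bdAct g x) (bdAct g y)) ∧
    S.Pairwise fun g h => ¬ EquivModInf G g h}

/-- The essential height `height_G(γ(x,y)) ∈ [0,∞]` of the geodesic with boundary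
endpoints `x, y ∈ ℝ ∪ {∞}` (with the convention `sup ∅ = 0`). -/
def essHeight (G : Subgroup SL2R) (x y : Option ℝ) : ℝ≥0∞ :=
  sSup (ENNReal.ofReal '' essHeightSet G x y)

lemma det_e (g : SL2R) : entryA g * entryD g - entryB g * entryC g = 1 := by
  have := g.2
  rw [Matrix.det_fin_two] at this
  exact this

lemma eA_mul (g h : SL2R) : entryA (g * h) = entryA g * entryA h + entryB g * entryC h := by
  simp [entryA, entryB, entryC, Matrix.mul_apply, Fin.sum_univ_two]
lemma eB_mul (g h : SL2R) : entryB (g * h) = entryA g * entryB h + entryB g * entryD h := by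
  simp [entryA, entryB, entryD, Matrix.mul_apply, Fin.sum_univ_two]
lemma eC_mul (g h : SL2R) : entryC (g * h) = entryC g * entryA h + entryD g * entryC h := by
  simp [entryA, entryD, entryC, Matrix.mul_apply, Fin.sum_univ_two]
lemma eD_mul (g h : SL2R) : entryD (g * h) = entryC g * entryB h + entryD g * entryD h := by
  simp [entryD, entryB, entryC, Matrix.mul_apply, Fin.sum_univ_two]
lemma eA_inv (g : SL2R) : entryA g⁻¹ = entryD g := by
  simp [entryA, entryD, Matrix.SpecialLinearGroup.coe_inv, Matrix.adjugate_fin_two]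
lemma eB_inv (g : SL2R) : entryB g⁻¹ = -entryB g := by
  simp [entryB, Matrix.SpecialLinearGroup.coe_inv, Matrix.adjugate_fin_two]
lemma eC_inv (g : SL2R) : entryC g⁻¹ = -entryC g := by
  simp [entryC, Matrix.SpecialLinearGroup.coe_inv, Matrix.adjugate_fin_two]
lemma eD_inv (g : SL2R) : entryD g⁻¹ = entryA g := by
  simp [entryA, entryD, Matrix.SpecialLinearGroup.coe_inv, Matrix.adjugate_fin_two]

lemma abs_sub_lt_of_floor {x y δ : ℝ} (hδ : 0 < δ) (h : ⌊x / δ⌋ = ⌊y / δ⌋) : |x - y| < δ := by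
  have := Int.abs_sub_lt_one_of_floor_eq_floor h
  rw [← sub_div, abs_div, abs_of_pos hδ, div_lt_one hδ] at this
  exact this

lemma box_finite (G : Subgroup SL2R) (hd : IsDiscreteSubgroup G) (R : ℝ) (hR : 0 < R) :
    {g : SL2R | g ∈ G ∧ ∀ i j, |g.1 i j| ≤ R}.Finite := by
  obtain ⟨ε, hε, h1⟩ := hd 1 G.one_mem
  set δ : ℝ := ε / (2 * R) with hδdef
  have hδ : 0 < δ := by positivity
  let f : SL2R → (Fin 2 → Fin 2 → ℤ) := fun g i j => ⌊g.1 i j / δ⌋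
  have hT : (Set.univ.pi fun _ : Fin 2 => Set.univ.pi fun _ : Fin 2 =>
      Set.Icc ⌊-R / δ⌋ ⌊R / δ⌋).Finite :=
    Set.Finite.pi fun _ => Set.Finite.pi fun _ => Set.finite_Icc _ _
  refine Set.Finite.of_injOn (f := f) ?_ ?_ hT
  · rintro g ⟨hg, hb⟩
    simp only [Set.mem_pi, Set.mem_univ, true_imp_iff, Set.mem_Icc, f]
    intro i j
    have := abs_le.1 (hb i j)
    constructor <;> apply Int.floor_le_floor <;> gcongr <;> linarith
  · rintro g ⟨hg, hbg⟩ h ⟨hh, hbh⟩ hf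
    have key : ∀ i j, |h.1 i j - g.1 i j| < δ := fun i j => by
      apply abs_sub_lt_of_floor hδ
      exact (congrFun (congrFun hf i) j).symm
    have e : g⁻¹ * h = 1 := by
      apply h1 _ (G.mul_mem (G.inv_mem hg) hh)
      have hdet := det_e g
      have bnd : ∀ p q s t : ℝ, |p| ≤ R → |q| ≤ R → |s| < δ → |t| < δ → |p * s + q * t| < ε := by
        intro p q s t hp hq hs ht
        have e1 : |p * s| ≤ R * |s| := by rw [abs_mul]; gcongr
        have e2 : |q * t| ≤ R * |t| := by rw [abs_mul]; gcongr
        have e3 : R * |s| < R * δ := by gcongr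
        have e4 : R * |t| < R * δ := by gcongr
        have e5 : ε = R * δ + R * δ := by rw [hδdef]; field_simp; ring
        have := abs_add_le (p * s) (q * t)
        linarith
      have nb : ∀ i j, |-(g.1 i j)| ≤ R := fun i j => by rw [abs_neg]; exact hbg i j
      intro i j
      fin_cases i <;> fin_cases j
      · have := bnd _ _ _ _ (hbg 1 1) (nb 0 1) (key 0 0) (key 1 0)
        have E := eA_mul g⁻¹ h
        rw [eA_inv, eB_inv] at E
        simp only [entryA, entryB, entryC, entryD] at E hdet
        convert this using 2
        simp only [Fin.zero_eta]
        rw [E]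
        simp
        linarith
      · have := bnd _ _ _ _ (hbg 1 1) (nb 0 1) (key 0 1) (key 1 1)
        have E := eB_mul g⁻¹ h
        rw [eA_inv, eB_inv] at E
        simp only [entryA, entryB, entryC, entryD] at E hdet
        convert this using 2
        simp only [Fin.zero_eta, Fin.mk_one]
        rw [E]
        simp
        linarith
      · have := bnd _ _ _ _ (nb 1 0) (hbg 0 0) (key 0 0) (key 1 0)
        have E := eC_mul g⁻¹ h
        rw [eC_inv, eD_inv] at E
        simp only [entryA, entryB, entryC, entryD] at E hdet
        convert this using 2
        simp only [Fin.zero_eta, Fin.mk_one]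
        rw [E]
        simp
        linarith
      · have := bnd _ _ _ _ (nb 1 0) (hbg 0 0) (key 0 1) (key 1 1)
        have E := eD_mul g⁻¹ h
        rw [eC_inv, eD_inv] at E
        simp only [entryA, entryB, entryC, entryD] at E hdet
        convert this using 2
        simp only [Fin.mk_one]
        rw [E]
        simp
        linarith
    exact inv_mul_eq_one.1 e

/-- Translation lengths. -/
def transSub (G : Subgroup SL2R) : AddSubgroup ℝ where
  carrier := {t | ∃ p ∈ G, p.1 = !![1, t; 0, 1]}
  zero_mem' := ⟨1, G.one_mem, by simp [Matrix.one_fin_two]⟩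
  add_mem' := by
    rintro s t ⟨p, hp, e⟩ ⟨q, hq, e'⟩
    refine ⟨p * q, G.mul_mem hp hq, ?_⟩
    rw [Matrix.SpecialLinearGroup.coe_mul, e, e', Matrix.mul_fin_two]
    simp [add_comm]
  neg_mem' := by
    rintro s ⟨p, hp, e⟩
    refine ⟨p⁻¹, G.inv_mem hp, ?_⟩
    rw [Matrix.SpecialLinearGroup.coe_inv, e, Matrix.adjugate_fin_two]
    simp

lemma exists_trans (G : Subgroup SL2R) (μ : ℝ) (h : ∃ p : SL2R, p.1 = !![1, μ; 0, 1] ∧ p ∈ G)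
    (n : ℤ) : ∃ p ∈ G, entryA p = 1 ∧ entryB p = n * μ ∧ entryC p = 0 ∧ entryD p = 1 := by
  have hm : μ ∈ transSub G := by
    obtain ⟨p, e, hp⟩ := h
    exact ⟨p, hp, e⟩
  obtain ⟨p, hp, e⟩ := (transSub G).zsmul_mem hm n
  refine ⟨p, hp, ?_⟩
  simp [entryA, entryB, entryC, entryD, e]

lemma shift_exists (t s : ℝ) (hs : s ≠ 0) : ∃ n : ℤ, 1 ≤ t + n * s ∧ t + n * s ≤ 1 + |s| := by
  obtain ⟨n, hn, -⟩ := existsUnique_add_zsmul_mem_Ico (abs_pos.2 hs) t 1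
  simp only [zsmul_eq_mul, Set.mem_Ico] at hn
  rcases abs_cases s with ⟨h, -⟩ | ⟨h, -⟩
  · exact ⟨n, by rw [h] at hn; exact hn.1, by rw [h] at hn ⊢; exact hn.2.le⟩
  · refine ⟨-n, ?_, ?_⟩ <;> push_cast <;> rw [h] at hn <;> rw [h] at * <;> linarith [hn.1, hn.2]

lemma exists_c0 (G : Subgroup SL2R) (hd : IsDiscreteSubgroup G) (hc : HasCuspAtInfty G) :
    ∃ c0 > 0, ∀ g ∈ G, entryC g ≠ 0 → c0 ≤ |entryC g| := by
  obtain ⟨μ, hμ, hp⟩ := hc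
  set R : ℝ := 2 + |μ| * (1 + |μ|) + |μ| with hRd
  have hμ0 := abs_nonneg μ
  have hR : 0 < R := by positivity
  have hfin := (box_finite G hd R hR).image (fun g => |entryC g|)
  have hfin2 := (hfin.subset (Set.inter_subset_left (t := {t : ℝ | 0 < t})))
  obtain ⟨m, hm, hmm⟩ : ∃ m > 0, ∀ t ∈ ((fun g => |entryC g|) '' {g : SL2R | g ∈ G ∧ ∀ i j, |g.1 i j| ≤ R}) ∩ {t : ℝ | 0 < t}, m ≤ t := by
    rcases Set.eq_empty_or_nonempty (((fun g => |entryC g|) '' {g : SL2R | g ∈ G ∧ ∀ i j, |g.1 i j| ≤ R}) ∩ {t : ℝ | 0 < t}) with he | hne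
    · exact ⟨1, one_pos, by rw [he]; simp⟩
    · obtain ⟨m, hm, h⟩ := Set.exists_min_image _ id hfin2 hne
      exact ⟨m, hm.2, h⟩
  refine ⟨min m 1, by positivity, fun g hg hcg => ?_⟩
  by_contra! hlt
  have hc1 : |entryC g| ≤ 1 := (hlt.trans_le (min_le_right _ _)).le
  have hcm : |entryC g| < m := hlt.trans_le (min_le_left _ _)
  obtain ⟨n, hn1, hn2⟩ := shift_exists (entryA g) (μ * entryC g) (mul_ne_zero hμ hcg)
  obtain ⟨p, hpG, pA, pB, pC, pD⟩ := exists_trans G μ hp n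
  set a := entryA (p * g) with ha
  have ha' : a = entryA g + n * (μ * entryC g) := by rw [ha, eA_mul, pA, pB]; ring
  have hcc : entryC (p * g) = entryC g := by rw [eC_mul, pC, pD]; ring
  rw [← ha'] at hn1 hn2
  obtain ⟨k, hk1, hk2⟩ := shift_exists (entryB (p * g)) (μ * a) (mul_ne_zero hμ (by linarith))
  obtain ⟨q, hqG, qA, qB, qC, qD⟩ := exists_trans G μ hp k
  set h := p * g * q with hh
  have hA : entryA h = a := by rw [hh, eA_mul, qA, qC]; ring
  have hB : entryB h = entryB (p * g) + k * (μ * a) := by rw [hh, eB_mul, qB, qD]; ring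
  have hC : entryC h = entryC g := by rw [hh, eC_mul, qA, qC, hcc]; ring
  have hG : h ∈ G := G.mul_mem (G.mul_mem hpG hg) hqG
  have hdet := det_e h
  rw [← hB] at hk1 hk2
  rw [abs_mul] at hn2 hk2
  have a1 : a ≤ 1 + |μ| := hn2.trans (by gcongr; exact mul_le_of_le_one_right hμ0 hc1)
  have a2 : |a| ≤ 1 + |μ| := by rw [abs_of_pos (by linarith)]; exact a1
  have b1 : entryB h ≤ 1 + |μ| * (1 + |μ|) := hk2.trans (by gcongr)
  have b0 : |entryB h| ≤ 1 + |μ| * (1 + |μ|) := by rw [abs_of_pos (by linarith)]; exact b1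
  have d1 : |entryD h| ≤ 2 + |μ| * (1 + |μ|) := by
    have e : a * entryD h = 1 + entryB h * entryC h := by rw [← hA]; linarith
    have e2 : |a| * |entryD h| ≤ 1 + |entryB h| * |entryC h| := by
      rw [← abs_mul, e, ← abs_mul]
      refine (abs_add_le _ _).trans (by simp)
    rw [abs_of_pos (by linarith : (0:ℝ) < a)] at e2
    rw [hC] at e2
    have e3 : |entryB h| * |entryC g| ≤ |entryB h| := mul_le_of_le_one_right (abs_nonneg _) hc1
    have e4 : |entryD h| ≤ a * |entryD h| := le_mul_of_one_le_left (abs_nonneg _) hn1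
    linarith
  have hbox : ∀ i j, |h.1 i j| ≤ R := by
    have hpp : 0 ≤ |μ| * (1 + |μ|) := by positivity
    have r1 : |entryA h| ≤ R := by rw [hA]; linarith
    have r2 : |entryB h| ≤ R := by linarith
    have r3 : |entryC h| ≤ R := by rw [hC]; linarith
    have r4 : |entryD h| ≤ R := by linarith
    intro i j
    fin_cases i <;> fin_cases j
    exacts [r1, r2, r3, r4]
  have := hmm |entryC g| ⟨⟨h, ⟨hG, hbox⟩, by simp [hC]⟩, abs_pos.2 hcg⟩
  linarith

lemma cusp_finite (G : Subgroup SL2R) (hd : IsDiscreteSubgroup G) (hc : HasCuspAtInfty G)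
    (M R : ℝ) :
    {v : ℝ | ∃ g ∈ G, entryC g ≠ 0 ∧ v = entryA g / entryC g ∧ entryC g ^ 2 ≤ M ∧ |v| ≤ R}.Finite := by
  obtain ⟨c0, h0, hmin⟩ := exists_c0 G hd hc
  rcases le_or_gt M 0 with hM | hM
  · refine Set.finite_empty.subset ?_
    rintro v ⟨g, hg, hcg, -, hcM, -⟩
    have : 0 < entryC g ^ 2 := by positivity
    exact absurd hcM (by linarith)
  have hδ : 0 < c0 / M := by positivity
  refine Set.Finite.of_injOn (f := fun v => ⌊v / (c0 / M)⌋) (t := Set.Icc ⌊-R / (c0 / M)⌋ ⌊R / (c0 / M)⌋) ?_ ?_ (Set.finite_Icc _ _)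
  · rintro v ⟨g, hg, hcg, -, -, hv⟩
    have := abs_le.1 hv
    constructor <;> apply Int.floor_le_floor <;> gcongr <;> linarith
  · rintro v ⟨g, hg, hcg, hv, hgM, -⟩ w ⟨h, hh, hch, hw, hhM, -⟩ hf
    by_contra hne
    have hlt := abs_sub_lt_of_floor hδ hf
    have e : entryC (g⁻¹ * h) = entryC g * entryC h * (v - w) := by
      rw [eC_mul, eC_inv, eD_inv, hv, hw]; field_simp; ring
    have hne' : entryC (g⁻¹ * h) ≠ 0 := by
      rw [e]; exact mul_ne_zero (mul_ne_zero hcg hch) (sub_ne_zero.2 hne)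
    have h1 := hmin _ (G.mul_mem (G.inv_mem hg) hh) hne'
    rw [e, abs_mul, abs_mul] at h1
    have h2 : |entryC g| * |entryC h| ≤ M := by
      nlinarith [sq_abs (entryC g), sq_abs (entryC h), sq_nonneg (|entryC g| - |entryC h|)]
    rw [lt_div_iff₀ hM] at hlt
    nlinarith [abs_nonneg (v - w)]

/-- cusps satisfying a predicate -/
def cuspSet (G : Subgroup SL2R) (P : ℝ → ℝ → Prop) : Set ℝ :=
  {v : ℝ | ∃ g ∈ G, entryC g ≠ 0 ∧ v = entryA g / entryC g ∧ P (entryC g ^ 2) v}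

lemma equiv_iff (G : Subgroup SL2R) (g h : SL2R) (hg : g ∈ G) (hh : h ∈ G) :
    EquivModInf G g h ↔ bdAct g⁻¹ none = bdAct h⁻¹ none := by
  have key : EquivModInf G g h ↔ entryC g * entryD h - entryD g * entryC h = 0 := by
    have e : entryC (g * h⁻¹) = entryC g * entryD h - entryD g * entryC h := by
      rw [eC_mul, eA_inv, eC_inv]; ring
    rw [← e]
    constructor
    · rintro ⟨k, hk, hck, rfl⟩
      simpa using hck
    · intro h0
      exact ⟨g * h⁻¹, G.mul_mem hg (G.inv_mem hh), h0, by simp⟩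
  rw [key]
  have d1 := det_e g
  have d2 := det_e h
  simp only [bdAct, eA_inv, eC_inv, neg_eq_zero]
  by_cases h1 : entryC g = 0 <;> by_cases h2 : entryC h = 0
  · simp [h1, h2]
  · have : entryD g ≠ 0 := by rintro h3; simp [h1, h3] at d1
    simp [h1, h2, this]
  · have : entryD h ≠ 0 := by rintro h3; simp [h2, h3] at d2
    simp [h1, h2, this]
  · simp only [h1, h2, if_false, Option.some.injEq]
    rw [div_eq_div_iff (neg_ne_zero.2 h1) (neg_ne_zero.2 h2)]
    constructor <;> intro h <;> linarith

lemma ess_iff (G : Subgroup SL2R) (x y : Option ℝ) (k : ℝ) (P : ℝ → ℝ → Prop)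
    (hP : ∀ g ∈ G, entryC g ≠ 0 → (ENNReal.ofReal k ≤ naiveHeight (bdAct g⁻¹ x) (bdAct g⁻¹ y) ↔
      P (entryC g ^ 2) (entryA g / entryC g))) :
    k ∈ essHeightSet G x y ↔ 0 < k ∧ (cuspSet G P).Infinite := by
  refine and_congr_right fun hk => ⟨?_, ?_⟩
  · rintro ⟨S, hS, hSG, hpw⟩
    have hinj : Set.InjOn (fun g : SL2R => bdAct g⁻¹ none) S := by
      intro g hg h hh e
      by_contra hne
      exact hpw hg hh hne ((equiv_iff G g h (hSG g hg).1 (hSG h hh).1).2 e)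
    have hinf := hS.image hinj
    intro hfin
    apply hinf
    refine ((hfin.image some).union (Set.finite_singleton none)).subset ?_
    rintro _ ⟨g, hg, rfl⟩
    obtain ⟨hgG, hk⟩ := hSG g hg
    by_cases hc : entryC g = 0
    · right; simp [bdAct, eC_inv, hc]
    · left
      have hc' : entryC g⁻¹ ≠ 0 := by rw [eC_inv]; simpa
      refine ⟨entryA g⁻¹ / entryC g⁻¹, ⟨g⁻¹, G.inv_mem hgG, hc', rfl, ?_⟩, by simp [bdAct, hc']⟩
      rw [← hP _ (G.inv_mem hgG) hc']
      simpa using hk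
  · intro hinf
    have hch : ∀ v : cuspSet G P, ∃ g ∈ G, entryC g ≠ 0 ∧ v.1 = entryA g / entryC g ∧ P (entryC g ^ 2) v := fun v => v.2
    choose f hfG hfc hfv hfP using hch
    have : Infinite (cuspSet G P) := hinf.to_subtype
    have hb : ∀ v, bdAct (f v) none = some v.1 := fun v => by
      simp [bdAct, hfc v, hfv v]
    have hinj : Function.Injective (fun v => (f v)⁻¹) := by
      intro v w e
      have e' : f v = f w := inv_injective e
      have := hb v
      rw [e', hb w] at this
      exact Subtype.ext (Option.some.inj this).symm
    refine ⟨Set.range (fun v => (f v)⁻¹), Set.infinite_range_of_injective hinj, ?_, ?_⟩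
    · rintro _ ⟨v, rfl⟩
      refine ⟨G.inv_mem (hfG v), ?_⟩
      rw [hP _ (hfG v) (hfc v), ← hfv v]
      exact hfP v
    · rintro _ ⟨v, rfl⟩ _ ⟨w, rfl⟩ hne he
      rw [equiv_iff G _ _ (G.inv_mem (hfG v)) (G.inv_mem (hfG w))] at he
      simp only [inv_inv, hb, Option.some.injEq] at he
      exact hne (by rw [Subtype.ext he])

lemma P_inf (g : SL2R) (hc : entryC g ≠ 0) (y k : ℝ) :
    ENNReal.ofReal k ≤ naiveHeight (bdAct g⁻¹ none) (bdAct g⁻¹ (some y)) ↔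
      2 * k * (entryC g ^ 2 * |y - entryA g / entryC g|) ≤ 1 := by
  have d := det_e g
  simp only [bdAct, eA_inv, eB_inv, eC_inv, eD_inv, neg_eq_zero, hc, if_false]
  by_cases h : -entryC g * y + entryA g = 0
  · have : y = entryA g / entryC g := by field_simp; linarith
    rw [if_pos h, ← this]
    simp [naiveHeight]
  · simp only [h, if_false, naiveHeight]
    rw [ENNReal.ofReal_le_ofReal_iff (by positivity)]
    have e : entryD g / -entryC g - (entryD g * y + -entryB g) / (-entryC g * y + entryA g)
        = 1 / (entryC g ^ 2 * (y - entryA g / entryC g)) := by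
      have h' : entryC g * y - entryA g ≠ 0 := fun h0 => h (by linarith)
      have e1 : -entryC g * y + entryA g = -(entryC g * y - entryA g) := by ring
      have e2 : entryC g ^ 2 * (y - entryA g / entryC g) = entryC g * (entryC g * y - entryA g) := by field_simp
      rw [e1, e2]
      field_simp
      linear_combination d
    have hpos : 0 < entryC g ^ 2 * |y - entryA g / entryC g| := by
      have : y - entryA g / entryC g ≠ 0 := by
        intro h0; apply h; field_simp at h0; linarith
      positivity
    rw [e, abs_div, abs_one, abs_mul, abs_of_nonneg (sq_nonneg (entryC g)), le_div_iff₀ two_pos, le_div_iff₀ hpos]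
    constructor <;> intro h <;> linarith

lemma P_fin (g : SL2R) (hc : entryC g ≠ 0) (x y k : ℝ) :
    ENNReal.ofReal k ≤ naiveHeight (bdAct g⁻¹ (some x)) (bdAct g⁻¹ (some y)) ↔
      2 * k * (entryC g ^ 2 * |x - entryA g / entryC g| * |y - entryA g / entryC g|) ≤ |x - y| := by
  have d := det_e g
  simp only [bdAct, eA_inv, eB_inv, eC_inv, eD_inv]
  by_cases h : -entryC g * y + entryA g = 0
  · have : y = entryA g / entryC g := by field_simp; linarith
    rw [if_pos h, ← this]
    simp [naiveHeight]
  by_cases h2 : -entryC g * x + entryA g = 0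
  · have : x = entryA g / entryC g := by field_simp; linarith
    rw [if_pos h2, ← this]
    simp [naiveHeight]
  · simp only [h, h2, if_false, naiveHeight]
    rw [ENNReal.ofReal_le_ofReal_iff (by positivity)]
    have e : (entryD g * x + -entryB g) / (-entryC g * x + entryA g) - (entryD g * y + -entryB g) / (-entryC g * y + entryA g)
        = (x - y) / (entryC g ^ 2 * (x - entryA g / entryC g) * (y - entryA g / entryC g)) := by
      have e2 : entryC g ^ 2 * (x - entryA g / entryC g) * (y - entryA g / entryC g) = (-entryC g * x + entryA g) * (-entryC g * y + entryA g) := by field_simp; ring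
      rw [e2, div_sub_div _ _ h2 h]
      congr 1
      linear_combination (x - y) * d
    have hpos : 0 < entryC g ^ 2 * |x - entryA g / entryC g| * |y - entryA g / entryC g| := by
      have : y - entryA g / entryC g ≠ 0 := by
        intro h0; apply h; field_simp at h0; linarith
      have : x - entryA g / entryC g ≠ 0 := by
        intro h0; apply h2; field_simp at h0; linarith
      positivity
    rw [e, abs_div, abs_mul, abs_mul, abs_of_nonneg (sq_nonneg (entryC g)), le_div_iff₀ two_pos, le_div_iff₀ hpos]
    constructor <;> intro h <;> linarith

/-- comparison of suprema -/
lemma sup_le_aux (c : ℝ) (hc : 0 < c) (A : Set ℝ) (B : ℝ≥0∞)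
    (hA : ∀ k ∈ A, 0 < k)
    (h : ∀ k ∈ A, ∀ k', 0 < k' → k' < k → ENNReal.ofReal (c * k') ≤ B) :
    ENNReal.ofReal c * sSup (ENNReal.ofReal '' A) ≤ B := by
  rw [ENNReal.mul_sSup]
  refine iSup₂_le ?_
  rintro _ ⟨k, hk, rfl⟩
  rw [← ENNReal.ofReal_mul hc.le]
  have hk0 := hA k hk
  have hcont : Filter.Tendsto (fun k' => ENNReal.ofReal (c * k')) (nhdsWithin k (Set.Iio k)) (nhds (ENNReal.ofReal (c * k))) := by
    apply Filter.Tendsto.mono_left _ nhdsWithin_le_nhds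
    apply Continuous.tendsto
    exact ENNReal.continuous_ofReal.comp (continuous_const.mul continuous_id)
  refine le_of_tendsto hcont ?_
  filter_upwards [Ioo_mem_nhdsLT hk0] with k' hk'
  exact h k hk k' hk'.1 hk'.2

lemma ess_inf_le (G : Subgroup SL2R) (y : ℝ) :
    2 * essHeight G none (some y) = LagrangeValue G y := by
  have hiff : ∀ k, k ∈ essHeightSet G none (some y) ↔ 0 < k ∧
      (cuspSet G (fun c v => 2 * k * (c * |y - v|) ≤ 1)).Infinite := fun k =>
    ess_iff G _ _ k _ fun g _ hc => P_inf g hc y k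
  apply le_antisymm
  · have := sup_le_aux 2 two_pos (essHeightSet G none (some y)) (LagrangeValue G y) (fun k hk => hk.1) ?_
    · simpa [essHeight] using this
    intro k hk k' hk' hlt
    refine le_sSup ⟨2 * k', ⟨by positivity, ?_⟩, rfl⟩
    refine ((hiff k).1 hk).2.mono ?_
    rintro v ⟨g, hg, hc, hv, h⟩
    refine ⟨g, hg, hc, hv, ?_⟩
    have : 0 < entryC g ^ 2 := by positivity
    rw [lt_div_iff₀ (by positivity)]
    rcases (abs_nonneg (y - v)).eq_or_lt with h0 | h0
    · rw [← h0]; simp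
    · have : 0 < entryC g ^ 2 * |y - v| := by positivity
      nlinarith
  · have := sup_le_aux 1 one_pos (LagrangeSet G y) (2 * essHeight G none (some y)) (fun k hk => hk.1) ?_
    · simpa [LagrangeValue] using this
    intro k hk k' hk' hlt
    have : ENNReal.ofReal (1 * k') = 2 * ENNReal.ofReal (k' / 2) := by
      rw [show (2 : ℝ≥0∞) = ENNReal.ofReal 2 by simp, ← ENNReal.ofReal_mul two_pos.le]
      congr 1; ring
    rw [this]
    gcongr
    refine le_sSup ⟨k' / 2, (hiff _).2 ⟨by positivity, ?_⟩, rfl⟩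
    refine hk.2.mono ?_
    rintro v ⟨g, hg, hc, hv, h⟩
    refine ⟨g, hg, hc, hv, ?_⟩
    have hc2 : 0 < entryC g ^ 2 := by positivity
    have hk0 := hk.1
    rw [lt_div_iff₀ (by positivity)] at h
    have : 0 ≤ entryC g ^ 2 * |y - v| := by positivity
    nlinarith

lemma ess_symm (G : Subgroup SL2R) (x y : Option ℝ) : essHeight G x y = essHeight G y x := by
  have : ∀ u v : Option ℝ, naiveHeight u v = naiveHeight v u := by
    intro u v
    cases u <;> cases v <;> simp [naiveHeight, abs_sub_comm]
  simp only [essHeight, essHeightSet]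
  congr 2
  ext k
  simp only [this (bdAct _ x) (bdAct _ y)]

lemma ess_inf_le_fin (G : Subgroup SL2R) (hd : IsDiscreteSubgroup G) (hcu : HasCuspAtInfty G)
    (x y : ℝ) (hxy : x ≠ y) : essHeight G none (some x) ≤ essHeight G (some x) (some y) := by
  have hiff : ∀ k, k ∈ essHeightSet G none (some x) ↔ 0 < k ∧
      (cuspSet G (fun c v => 2 * k * (c * |x - v|) ≤ 1)).Infinite := fun k =>
    ess_iff G _ _ k _ fun g _ hc => P_inf g hc x k
  have hiff2 : ∀ k, k ∈ essHeightSet G (some x) (some y) ↔ 0 < k ∧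
      (cuspSet G (fun c v => 2 * k * (c * |x - v| * |y - v|) ≤ |x - y|)).Infinite := fun k =>
    ess_iff G _ _ k _ fun g _ hc => P_fin g hc x y k
  have := sup_le_aux 1 one_pos (essHeightSet G none (some x)) (essHeight G (some x) (some y)) (fun k hk => hk.1) ?_
  · simpa [essHeight] using this
  intro k hk k' hk' hlt
  rw [one_mul]
  refine le_sSup ⟨k', (hiff2 _).2 ⟨hk', ?_⟩, rfl⟩
  have hk0 := hk.1
  obtain ⟨c0, h0, hmin⟩ := exists_c0 G hd hcu
  have hD : 0 < |x - y| := abs_pos.2 (sub_ne_zero.2 hxy)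
  set D := |x - y|
  set ε := D * (k - k') / k' with hε
  have hεpos : 0 < ε := by have : 0 < k - k' := by linarith
                           positivity
  have hfin := cusp_finite G hd hcu (1 / (2 * k * ε)) (|x| + 1 / (2 * k * c0 ^ 2))
  refine (((hiff _).1 hk).2.sdiff hfin).mono ?_
  rintro v ⟨⟨g, hg, hc, hv, h⟩, hnot⟩
  refine ⟨g, hg, hc, hv, ?_⟩
  have hc2 : 0 < entryC g ^ 2 := by positivity
  have hcc : c0 ^ 2 ≤ entryC g ^ 2 := by
    rw [← sq_abs (entryC g)]; have := hmin g hg hc; gcongr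
  have hnn := abs_nonneg (x - v)
  have hlt : |x - v| < ε := by
    by_contra! hge
    apply hnot
    refine ⟨g, hg, hc, hv, ?_, ?_⟩
    · rw [le_div_iff₀ (by positivity)]
      have : entryC g ^ 2 * ε ≤ entryC g ^ 2 * |x - v| := by gcongr
      nlinarith
    · have : |x - v| ≤ 1 / (2 * k * c0 ^ 2) := by
        rw [le_div_iff₀ (by positivity)]
        have : c0 ^ 2 * |x - v| ≤ entryC g ^ 2 * |x - v| := by gcongr
        nlinarith
      have h3 := abs_sub_abs_le_abs_sub v x
      rw [abs_sub_comm v x] at h3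
      linarith
  have hyv : |y - v| ≤ D + ε := by
    have := abs_sub_le y x v
    rw [abs_sub_comm y x] at this
    linarith
  have hkD : k' * (D + ε) = k * D := by rw [hε]; field_simp; ring
  calc 2 * k' * (entryC g ^ 2 * |x - v| * |y - v|)
      ≤ 2 * k' * (entryC g ^ 2 * |x - v| * (D + ε)) := by gcongr
    _ = 2 * k * (entryC g ^ 2 * |x - v|) * D := by linear_combination 2 * (entryC g ^ 2 * |x - v|) * hkD
    _ ≤ 1 * D := by gcongr
    _ = D := one_mul D

lemma ess_fin_le (G : Subgroup SL2R) (hd : IsDiscreteSubgroup G) (hcu : HasCuspAtInfty G)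
    (x y : ℝ) (hxy : x ≠ y) : essHeight G (some x) (some y) ≤
      max (essHeight G none (some x)) (essHeight G none (some y)) := by
  have hiff : ∀ x k, k ∈ essHeightSet G none (some x) ↔ 0 < k ∧
      (cuspSet G (fun c v => 2 * k * (c * |x - v|) ≤ 1)).Infinite := fun x k =>
    ess_iff G _ _ k _ fun g _ hc => P_inf g hc x k
  have hiff2 : ∀ k, k ∈ essHeightSet G (some x) (some y) ↔ 0 < k ∧
      (cuspSet G (fun c v => 2 * k * (c * |x - v| * |y - v|) ≤ |x - y|)).Infinite := fun k =>
    ess_iff G _ _ k _ fun g _ hc => P_fin g hc x y k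
  have := sup_le_aux 1 one_pos (essHeightSet G (some x) (some y))
    (max (essHeight G none (some x)) (essHeight G none (some y))) (fun k hk => hk.1) ?_
  · simpa [essHeight] using this
  intro k hk k' hk' hlt
  rw [one_mul]
  have hk0 := hk.1
  obtain ⟨c0, h0, hmin⟩ := exists_c0 G hd hcu
  have hD : 0 < |x - y| := abs_pos.2 (sub_ne_zero.2 hxy)
  set D := |x - y| with hDd
  set ε := D * (k - k') / k with hε
  have hεpos : 0 < ε := by have : 0 < k - k' := by linarith
                           positivity
  have hkD : k * (D - ε) = k' * D := by rw [hε]; field_simp; ring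
  have hfin := cusp_finite G hd hcu (D / (2 * k * ε ^ 2)) (|x| + D / (2 * k * c0 ^ 2 * ε))
  have hinf := ((hiff2 _).1 hk).2.sdiff hfin
  -- the geometric estimate near one endpoint
  have near : ∀ s t C : ℝ, 0 ≤ s → 0 < C → D - ε ≤ t → 2 * k * (C * s * t) ≤ D → 2 * k' * (C * s) ≤ 1 := by
    intro s t C hs hC ht h
    have h1 : 2 * k * (C * s * (D - ε)) ≤ D := le_trans (by gcongr) h
    have h2 : 2 * k' * (C * s) * D ≤ 1 * D := by
      rw [one_mul]; refine le_trans (le_of_eq ?_) h1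
      linear_combination (-2) * (C * s) * hkD
    exact le_of_mul_le_mul_right h2 hD
  have hsub : (cuspSet G (fun c v => 2 * k * (c * |x - v| * |y - v|) ≤ D)) \ {v : ℝ | ∃ g ∈ G, entryC g ≠ 0 ∧ v = entryA g / entryC g ∧ entryC g ^ 2 ≤ D / (2 * k * ε ^ 2) ∧ |v| ≤ |x| + D / (2 * k * c0 ^ 2 * ε)} ⊆ cuspSet G (fun c v => 2 * k' * (c * |x - v|) ≤ 1) ∪ cuspSet G (fun c v => 2 * k' * (c * |y - v|) ≤ 1) := by
    rintro v ⟨⟨g, hg, hc, hv, h⟩, hnot⟩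
    have hc2 : 0 < entryC g ^ 2 := by positivity
    have hcc : c0 ^ 2 ≤ entryC g ^ 2 := by
      rw [← sq_abs (entryC g)]; have := hmin g hg hc; gcongr
    have hx0 := abs_nonneg (x - v)
    have hy0 := abs_nonneg (y - v)
    have htri : D ≤ |x - v| + |y - v| := by
      have := abs_sub_le x v y
      rw [abs_sub_comm v y] at this
      exact this
    by_cases hx : |x - v| < ε
    · left
      exact ⟨g, hg, hc, hv, near _ |y - v| _ hx0 hc2 (by linarith) h⟩
    by_cases hy : |y - v| < ε
    · right
      exact ⟨g, hg, hc, hv, near _ |x - v| _ hy0 hc2 (by linarith) (by rw [mul_right_comm (entryC g ^ 2)]; exact h)⟩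
    exfalso
    push Not at hx hy
    apply hnot
    refine ⟨g, hg, hc, hv, ?_, ?_⟩
    · rw [le_div_iff₀ (by positivity)]
      refine le_trans ?_ h
      calc entryC g ^ 2 * (2 * k * ε ^ 2) = 2 * k * (entryC g ^ 2 * ε * ε) := by ring
        _ ≤ _ := by gcongr
    · have : |x - v| ≤ D / (2 * k * c0 ^ 2 * ε) := by
        rw [le_div_iff₀ (by positivity)]
        refine le_trans ?_ h
        calc |x - v| * (2 * k * c0 ^ 2 * ε) = 2 * k * (c0 ^ 2 * |x - v| * ε) := by ring
          _ ≤ _ := by gcongr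
      have h3 := abs_sub_abs_le_abs_sub v x
      rw [abs_sub_comm v x] at h3
      linarith
  rcases Set.infinite_union.1 (hinf.mono hsub) with h | h
  · exact le_max_of_le_left (le_sSup ⟨k', (hiff _ _).2 ⟨hk', h⟩, rfl⟩)
  · exact le_max_of_le_right (le_sSup ⟨k', (hiff _ _).2 ⟨hk', h⟩, rfl⟩)

/-- The set of doubled essential heights of all complete hyperbolic geodesics equals
the Lagrange spectrum `𝓛(G,∞)`. -/
theorem spectrum_eq_doubled_essential_heights (G : Subgroup SL2R)
    (hG : IsNonUniformLattice G) (hcusp : HasCuspAtInfty G) :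
    {L : ℝ≥0∞ | ∃ x y : Option ℝ, x ≠ y ∧ L = 2 * essHeight G x y} =
      LagrangeSpectrum G := by
  ext L
  constructor
  · rintro ⟨x, y, hxy, rfl⟩
    rcases x with _ | x <;> rcases y with _ | y
    · exact absurd rfl hxy
    · exact ⟨y, (ess_inf_le G y).symm⟩
    · exact ⟨x, by rw [ess_symm, ess_inf_le]⟩
    · have hne : x ≠ y := fun h => hxy (by rw [h])
      have e : essHeight G (some x) (some y) =
          max (essHeight G none (some x)) (essHeight G none (some y)) := by
        apply le_antisymm (ess_fin_le G hG.1 hcusp x y hne)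
        apply max_le (ess_inf_le_fin G hG.1 hcusp x y hne)
        rw [ess_symm G (some x)]
        exact ess_inf_le_fin G hG.1 hcusp y x hne.symm
      rw [e]
      rcases max_choice (essHeight G none (some x)) (essHeight G none (some y)) with h | h
      · exact ⟨x, by rw [h, ess_inf_le]⟩
      · exact ⟨y, by rw [h, ess_inf_le]⟩
  · rintro ⟨α, rfl⟩
    exact ⟨none, some α, by simp, (ess_inf_le G α).symm⟩
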